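/- Let V be a variety whose 2-generated free algebra F_V(2) is finite. The following are equivalent: (1) V is congruence meet-semidistributive; (2) for every n ≥ 2, the n-commutator is neutral in V (i.e., [α₁,…,αₙ] = α₁∧⋯∧αₙ for all congruences α₁,…,αₙ of every A ∈ V); (3) for some n ≥ 2, the n-commutator is neutral in V. -/

import Mathlib

set_option autoImplicit false

namespace UA

/-- A signature: a type of operation symbols, each with a finite arity. -/
structure Signature : Type 1 where
  ops : Type
  arity : ops → ℕ

/-- An algebra for a signature: a carrier set together with an interpretation
of every operation symbol. -/
structure Algebra (σ : Signature) : Type 1 where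
  carrier : Type
  interp : (o : σ.ops) → (Fin (σ.arity o) → carrier) → carrier

variable {σ : Signature}

/-- A congruence of an algebra: an equivalence relation compatible with all
basic operations. -/
structure Con (A : Algebra σ) : Type where
  r : A.carrier → A.carrier → Prop
  refl : ∀ a, r a a
  symm : ∀ {a b}, r a b → r b a
  trans : ∀ {a b c}, r a b → r b c → r a c
  compat : ∀ (o : σ.ops) (x y : Fin (σ.arity o) → A.carrier),
      (∀ i, r (x i) (y i)) → r (A.interp o x) (A.interp o y)

namespace Con

variable {A : Algebra σ}

instance : LE (Con A) := ⟨fun c d => ∀ a b : A.carrier, c.r a b → d.r a b⟩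
instance : LT (Con A) := ⟨fun c d => c ≤ d ∧ ¬ d ≤ c⟩

/-- The total congruence `1_A`. -/
def top : Con A where
  r := fun _ _ => True
  refl := fun _ => trivial
  symm := fun _ => trivial
  trans := fun _ _ => trivial
  compat := fun _ _ _ _ => trivial

/-- The identity congruence `0_A`. -/
def bot : Con A where
  r := fun a b => a = b
  refl := fun _ => rfl
  symm := fun h => h.symm
  trans := fun h h' => h.trans h'
  compat := fun o _ _ h => congrArg (A.interp o) (funext h)

/-- Meet of an arbitrary family of congruences (intersection). -/
def sInf (S : Set (Con A)) : Con A where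
  r a b := ∀ c ∈ S, c.r a b
  refl a c _ := c.refl a
  symm h c hc := c.symm (h c hc)
  trans h h' c hc := c.trans (h c hc) (h' c hc)
  compat o x y h c hc := c.compat o x y (fun i => h i c hc)

/-- Binary meet of congruences. -/
def inf (c d : Con A) : Con A where
  r a b := c.r a b ∧ d.r a b
  refl a := ⟨c.refl a, d.refl a⟩
  symm h := ⟨c.symm h.1, d.symm h.2⟩
  trans h h' := ⟨c.trans h.1 h'.1, d.trans h.2 h'.2⟩
  compat o x y h := ⟨c.compat o x y fun i => (h i).1, d.compat o x y fun i => (h i).2⟩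

/-- The congruence generated by a set of pairs. -/
def conGen (S : Set (A.carrier × A.carrier)) : Con A :=
  sInf {c : Con A | ∀ p ∈ S, c.r p.1 p.2}

/-- Binary join of congruences. -/
def sup (c d : Con A) : Con A := conGen {p | c.r p.1 p.2 ∨ d.r p.1 p.2}

/-- Join of a family of congruences. -/
def iSup {I : Type} (f : I → Con A) : Con A := conGen {p | ∃ i, (f i).r p.1 p.2}

/-- Composition of congruences as binary relations. -/
def comp (c d : Con A) (a b : A.carrier) : Prop := ∃ x, c.r a x ∧ d.r x b

/-- `d` covers `c` in the congruence lattice. -/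
def Covers (c d : Con A) : Prop := c < d ∧ ∀ e : Con A, c < e → e ≤ d → e = d

theorem le_sup_right {c d : Con A} : d ≤ sup c d :=
  fun a b h e he => he (a, b) (Or.inr h)

def toSetoid (c : Con A) : Setoid A.carrier := ⟨c.r, ⟨c.refl, c.symm, c.trans⟩⟩

end Con

/-- The quotient algebra `A/γ`. -/
noncomputable def quotAlg (A : Algebra σ) (γ : Con A) : Algebra σ where
  carrier := Quotient γ.toSetoid
  interp o x := Quotient.mk γ.toSetoid (A.interp o (fun i => (x i).out))

/-- The quotient congruence `α/γ` for `γ ≤ α`. -/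
noncomputable def Con.quot {A : Algebra σ} (α γ : Con A) (h : γ ≤ α) : Con (quotAlg A γ) where
  r x y := Quotient.liftOn₂ x y (fun a b => α.r a b)
    (fun a b a' b' ha hb => propext
      ⟨fun hr => α.trans (α.symm (h _ _ ha)) (α.trans hr (h _ _ hb)),
       fun hr => α.trans (h _ _ ha) (α.trans hr (α.symm (h _ _ hb)))⟩)
  refl x := Quotient.inductionOn x fun a => α.refl a
  symm {x y} h' := Quotient.inductionOn₂ x y (fun _ _ hab => α.symm hab) h'
  trans {x y z} h1 h2 :=
    Quotient.inductionOn₃ x y z (fun _ _ _ hab hbc => α.trans hab hbc) h1 h2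
  compat o x y hxy := by
    show α.r (A.interp o fun i => (x i).out) (A.interp o fun i => (y i).out)
    refine α.compat o _ _ fun i => ?_
    have h1 := hxy i
    rw [← Quotient.out_eq (x i), ← Quotient.out_eq (y i)] at h1
    exact h1

/-- The polynomial operations of an algebra: the clone generated by the basic
operations, the projections and the constants. -/
inductive IsPolynomial (A : Algebra σ) : {n : ℕ} → ((Fin n → A.carrier) → A.carrier) → Prop
  | proj {n : ℕ} (i : Fin n) : IsPolynomial A (fun x => x i)
  | const {n : ℕ} (a : A.carrier) : IsPolynomial A (fun _ : Fin n → A.carrier => a)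
  | app {n : ℕ} (o : σ.ops) (g : Fin (σ.arity o) → (Fin n → A.carrier) → A.carrier) :
      (∀ j, IsPolynomial A (g j)) → IsPolynomial A (fun x => A.interp o (fun j => g j x))

/-- Substituting, coordinatewise according to the grouping `g` and the choice
vector `ε`, the entries of `b` (where `ε` is `true`) or of `a` (where `ε` is `false`). -/
def chooseVec {β : Type} {N n : ℕ} (g : Fin N → Fin n) (a b : Fin N → β)
    (ε : Fin n → Bool) : Fin N → β :=
  fun i => if ε (g i) then b i else a i

/-- The higher centralizer relation `C(α₁,…,αₙ,β;δ)` of Bulatov.  Polynomials with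
grouped variables are modelled by a polynomial `p` of arity `N` together with a
grouping map `g : Fin N → Fin (n+1)`; the group `Fin.last n` is the `β`-group. -/
def Centralizes {A : Algebra σ} {n : ℕ} (α : Fin n → Con A) (β δ : Con A) : Prop :=
  ∀ (N : ℕ) (p : (Fin N → A.carrier) → A.carrier), IsPolynomial A p →
    ∀ (g : Fin N → Fin (n + 1)) (a b : Fin N → A.carrier),
      (∀ i, (Fin.lastCases (motive := fun _ => Con A) β α (g i)).r (a i) (b i)) →
      (∀ ε : Fin n → Bool, ε ≠ (fun _ => true) →
        δ.r (p (chooseVec g a b (Fin.lastCases (motive := fun _ => Bool) false ε)))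
            (p (chooseVec g a b (Fin.lastCases (motive := fun _ => Bool) true ε)))) →
      δ.r (p (chooseVec g a b (Fin.lastCases (motive := fun _ => Bool) false fun _ => true)))
          (p (chooseVec g a b (Fin.lastCases (motive := fun _ => Bool) true fun _ => true)))

/-- The higher commutator `[α₁,…,αₙ,β]`: the smallest congruence `δ` such that
`C(α₁,…,αₙ,β;δ)` holds. -/
def commutator {A : Algebra σ} {n : ℕ} (α : Fin n → Con A) (β : Con A) : Con A :=
  Con.sInf {δ : Con A | Centralizes α β δ}

/-- The higher commutator of a nonempty list of congruences, with the convention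
`[α] = α` for a single congruence. -/
def commList {A : Algebra σ} : {n : ℕ} → (Fin (n + 1) → Con A) → Con A
  | 0, γ => γ 0
  | (n+1), γ => commutator (fun j : Fin (n+1) => γ j.castSucc) (γ (Fin.last (n+1)))

/-- The `m`-fold commutator `[θ,…,θ]_m` (for `m ≥ 1`). -/
def nfold {A : Algebra σ} (θ : Con A) (m : ℕ) : Con A :=
  commList (fun _ : Fin (m - 1 + 1) => θ)

/-- The binary commutator `[c,d]`. -/
def binComm {A : Algebra σ} (c d : Con A) : Con A := commutator (fun _ : Fin 1 => c) d

/-- The lower central series `(θ]ⁿ`. -/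
def lcs {A : Algebra σ} (θ : Con A) : ℕ → Con A
  | 0 => θ
  | (k+1) => binComm θ (lcs θ k)

/-- The derived series `[θ]ⁿ`. -/
def derived {A : Algebra σ} (θ : Con A) : ℕ → Con A
  | 0 => θ
  | (k+1) => binComm (derived θ k) (derived θ k)

/-- An algebra is nilpotent if some term of the lower central series of `1_A` is `0_A`. -/
def Nilpotent (A : Algebra σ) : Prop := ∃ m, lcs (Con.top : Con A) m = Con.bot

/-- An algebra is nilpotent of class `n` if `(1_A]ⁿ = 0_A`. -/
def NilpotentOfClass (A : Algebra σ) (n : ℕ) : Prop := lcs (Con.top : Con A) n = Con.bot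

/-- A congruence is solvable if some term of its derived series is `0_A`. -/
def SolvableCon {A : Algebra σ} (θ : Con A) : Prop := ∃ m, derived θ m = Con.bot

/-- `A` is `n`-supernilpotent if `[1_A,…,1_A]_n = 0_A`. -/
def Supernilpotent (A : Algebra σ) (n : ℕ) : Prop := nfold (Con.top : Con A) n = Con.bot

/-- A polynomial `f` absorbs the tuple `a` to the element `c`. -/
def Absorbs (A : Algebra σ) {k : ℕ} (f : (Fin k → A.carrier) → A.carrier)
    (a : Fin k → A.carrier) (c : A.carrier) : Prop :=
  ∀ b : Fin k → A.carrier, (∃ i, b i = a i) → f b = c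

/-- Terms over a signature with variables in `X`. -/
inductive Term (σ : Signature) (X : Type) : Type
  | var : X → Term σ X
  | app : (o : σ.ops) → (Fin (σ.arity o) → Term σ X) → Term σ X

/-- Evaluation of a term in an algebra under an assignment of the variables. -/
def Term.eval {X : Type} (A : Algebra σ) (v : X → A.carrier) : Term σ X → A.carrier
  | Term.var x => v x
  | Term.app o t => A.interp o fun i => Term.eval A v (t i)

/-- Substitution of terms into a term. -/
def Term.subst {X Y : Type} : Term σ X → (X → Term σ Y) → Term σ Y
  | Term.var x, s => s x
  | Term.app o t, s => Term.app o fun i => Term.subst (t i) s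

/-- `A` possesses a Mal'cev term. -/
def HasMalcevTerm (A : Algebra σ) : Prop :=
  ∃ t : Term σ (Fin 3), ∀ a b : A.carrier,
    t.eval A ![a, b, b] = a ∧ t.eval A ![b, b, a] = a

/-- A class of algebras is a variety when it is the class of all models of a set
of identities. -/
def IsVariety (V : Algebra σ → Prop) : Prop :=
  ∃ E : Set (Term σ ℕ × Term σ ℕ),
    ∀ A : Algebra σ, V A ↔ ∀ e ∈ E, ∀ v : ℕ → A.carrier, e.1.eval A v = e.2.eval A v

/-- Two terms are `V`-equivalent when they evaluate equally in every member of `V`. -/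
def vSetoid (V : Algebra σ → Prop) (X : Type) : Setoid (Term σ X) where
  r t s := ∀ A : Algebra σ, V A → ∀ v : X → A.carrier, t.eval A v = s.eval A v
  iseqv := ⟨fun _ _ _ _ => rfl, fun h A hA v => (h A hA v).symm,
    fun h h' A hA v => (h A hA v).trans (h' A hA v)⟩

/-- The `V`-free algebra on the set `X` of generators. -/
noncomputable def freeAlg (V : Algebra σ → Prop) (X : Type) : Algebra σ where
  carrier := Quotient (vSetoid V X)
  interp o x := Quotient.mk (vSetoid V X) (Term.app o fun i => (x i).out)

/-- The principal congruence `θ(a,b)` generated by the pair `(a,b)`. -/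
def conPair (A : Algebra σ) (a b : A.carrier) : Con A := Con.conGen {(a, b)}

/-- A weak difference term for the class `V`. -/
def IsWeakDiffTerm (V : Algebra σ → Prop) (c : Term σ (Fin 3)) : Prop :=
  ∀ A : Algebra σ, V A → ∀ a b : A.carrier,
    (binComm (conPair A a b) (conPair A a b)).r (c.eval A ![a, b, b]) a ∧
    (binComm (conPair A a b) (conPair A a b)).r a (c.eval A ![b, b, a])

/-- A weak `n`-difference term for the class `V`. -/
def IsWeakNDiffTerm (V : Algebra σ → Prop) (n : ℕ) (c : Term σ (Fin 3)) : Prop :=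
  ∀ A : Algebra σ, V A → ∀ a b : A.carrier,
    (nfold (conPair A a b) n).r (c.eval A ![a, b, b]) a ∧
    (nfold (conPair A a b) n).r a (c.eval A ![b, b, a])

/-- Order-preserving maps on the congruence lattice. -/
def MonotoneCon {A : Algebra σ} (F : Con A → Con A) : Prop :=
  ∀ c d : Con A, c ≤ d → F c ≤ F d

/-- `p` is a weak `f`-term of `A` with respect to the interpretation `F`. -/
def IsWeakFTerm (A : Algebra σ) (F : Con A → Con A) (p : Term σ (Fin 3)) : Prop :=
  ∀ (θ : Con A) (a b : A.carrier), θ.r a b →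
    (F θ).r (p.eval A ![a, b, b]) a ∧ (F θ).r a (p.eval A ![b, b, a])

/-- `p` is a weak `f`-term for the class `V`. -/
def HasWeakFTermVariety (V : Algebra σ → Prop) (p : Term σ (Fin 3)) : Prop :=
  ∀ A : Algebra σ, V A → ∃ F : Con A → Con A, MonotoneCon F ∧ IsWeakFTerm A F p

/-- The set `T^θ_{n,f}(θ₁,…,θₙ)` of pairs coming from polynomials which
`f(θ)`-absorb on the cube `{ā₁,b̄₁}×⋯×{āₙ,b̄ₙ}`. -/
def TSet (A : Algebra σ) (F : Con A → Con A) (θ : Con A) {n : ℕ} (θs : Fin n → Con A) :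
    Set (A.carrier × A.carrier) :=
  {pr | ∃ (N : ℕ) (g : (Fin N → A.carrier) → A.carrier), IsPolynomial A g ∧
    ∃ (gr : Fin N → Fin n) (a b : Fin N → A.carrier),
      (∀ i, (θs (gr i)).r (a i) (b i)) ∧
      (∀ ε : Fin n → Bool, (∃ j, ε j = false) →
        (F θ).r (g (fun i => if ε (gr i) then b i else a i)) (g a)) ∧
      pr = (g b, g a)}

/-- Homomorphisms of algebras. -/
def IsHom (A B : Algebra σ) (h : A.carrier → B.carrier) : Prop :=
  ∀ (o : σ.ops) (x : Fin (σ.arity o) → A.carrier),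
    h (A.interp o x) = B.interp o (fun i => h (x i))

/-- The product of a family of algebras. -/
def prodAlg {I : Type} (As : I → Algebra σ) : Algebra σ where
  carrier := ∀ i, (As i).carrier
  interp o x i := (As i).interp o (fun j => x j i)

/-- The subuniverse generated by a subset. -/
inductive Gen (A : Algebra σ) (S : Set A.carrier) : A.carrier → Prop
  | base {a : A.carrier} : a ∈ S → Gen A S a
  | app (o : σ.ops) (x : Fin (σ.arity o) → A.carrier) :
      (∀ i, Gen A S (x i)) → Gen A S (A.interp o x)

/-- `A` possesses a Taylor term. -/
def HasTaylorTerm (A : Algebra σ) : Prop :=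
  ∃ (n : ℕ) (t : Term σ (Fin n)), 1 ≤ n ∧
    (∀ a : A.carrier, t.eval A (fun _ => a) = a) ∧
    ∀ i : Fin n, ∃ u v : Fin n → Bool, u i = true ∧ v i = false ∧
      ∀ x y : A.carrier,
        t.eval A (fun j => if u j then x else y) = t.eval A (fun j => if v j then x else y)

/-- The variety `V` possesses a Taylor term. -/
def VarietyHasTaylorTerm (V : Algebra σ → Prop) : Prop :=
  ∃ (n : ℕ) (t : Term σ (Fin n)), 1 ≤ n ∧
    (∀ A : Algebra σ, V A → ∀ a : A.carrier, t.eval A (fun _ => a) = a) ∧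
    ∀ i : Fin n, ∃ u v : Fin n → Bool, u i = true ∧ v i = false ∧
      ∀ A : Algebra σ, V A → ∀ x y : A.carrier,
        t.eval A (fun j => if u j then x else y) = t.eval A (fun j => if v j then x else y)

/-- `Ξ(θ)`: the smallest set of congruences containing `θ` and closed under
higher commutators (of arity at least 2) of its members. -/
inductive Xi {A : Algebra σ} (θ : Con A) : Con A → Prop
  | base : Xi θ θ
  | comm {k : ℕ} (γ : Fin (k + 2) → Con A) : (∀ j, Xi θ (γ j)) → Xi θ (commList γ)

/-- An expanded loop on the carrier `α` with extra operations indexed by `ι`. -/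
structure ExpLoop (ι : Type) (ar : ι → ℕ) (α : Type) : Type where
  mul : α → α → α
  ldiv : α → α → α
  rdiv : α → α → α
  zero : α
  extra : (i : ι) → (Fin (ar i) → α) → α
  ldiv_mul : ∀ x y, ldiv x (mul x y) = y
  mul_rdiv : ∀ x y, rdiv (mul x y) y = x
  mul_ldiv : ∀ x y, mul x (ldiv x y) = y
  rdiv_mul : ∀ x y, mul (rdiv x y) y = x
  zero_mul : ∀ x, mul zero x = x
  mul_zero : ∀ x, mul x zero = x

/-- Operation symbols of an expanded loop. -/
inductive LoopOp (ι : Type) : Type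
  | mul | ldiv | rdiv | zero
  | extra : ι → LoopOp ι

/-- The signature of an expanded loop. -/
@[reducible] def loopSig (ι : Type) (ar : ι → ℕ) : Signature where
  ops := LoopOp ι
  arity o := match o with
    | .mul => 2
    | .ldiv => 2
    | .rdiv => 2
    | .zero => 0
    | .extra i => ar i

/-- The algebra underlying an expanded loop. -/
def ExpLoop.toAlgebra {ι : Type} {ar : ι → ℕ} {α : Type} (L : ExpLoop ι ar α) :
    Algebra (loopSig ι ar) where
  carrier := α
  interp o := match o with
    | .mul => fun x => L.mul (x 0) (x 1)
    | .ldiv => fun x => L.ldiv (x 0) (x 1)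
    | .rdiv => fun x => L.rdiv (x 0) (x 1)
    | .zero => fun _ => L.zero
    | .extra i => L.extra i

/-- An expanded loop is of `n`-type. -/
def ExpLoop.IsNType {ι : Type} {ar : ι → ℕ} {α : Type} (L : ExpLoop ι ar α) (n : ℕ) : Prop :=
  (∀ p : Σ k : ℕ, (Fin k → α) → α,
      (∃ i : ι, p = ⟨ar i, L.extra i⟩) ↔
        (1 ≤ p.1 ∧ p.1 ≤ n - 1 ∧ IsPolynomial L.toAlgebra p.2 ∧
          Absorbs L.toAlgebra p.2 (fun _ => L.zero) L.zero)) ∧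
  (∀ f : (Fin (n - 1) → α) → α,
      IsPolynomial L.toAlgebra f → Absorbs L.toAlgebra f (fun _ => L.zero) L.zero →
      ∀ (j : Fin (n - 1)) (x : Fin (n - 1) → α) (u v : α),
        f (Function.update x j (L.mul u v)) =
          L.mul (f (Function.update x j u)) (f (Function.update x j v))) ∧
  (∀ k : ℕ, 2 ≤ k → k < n →
      commList (Fin.snoc (fun _ : Fin (n - k) => (Con.top : Con L.toAlgebra))
        (nfold Con.top k)) = Con.bot)

/-- `A` is polynomially equivalent to an `n`-type expanded loop on the same carrier. -/
def PolyEquivNTypeLoop (A : Algebra σ) (n : ℕ) : Prop :=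
  ∃ (ι : Type) (ar : ι → ℕ) (L : ExpLoop ι ar A.carrier),
    L.IsNType n ∧
    ∀ (k : ℕ) (f : (Fin k → A.carrier) → A.carrier),
      IsPolynomial A f ↔ IsPolynomial L.toAlgebra f

/-- Left-associated product of a list with initial value `c`. -/
def lprodFrom {β : Type} (mul : β → β → β) (c : β) (l : List β) : β := List.foldl mul c l

/-- Left-associated product of a list (with a default value for the empty list). -/
def lprodList {β : Type} (mul : β → β → β) (dflt : β) : List β → β
  | [] => dflt
  | a :: l => List.foldl mul a l

/-- Left-associated product of a nonempty tuple. -/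
def lassoc {β : Type} (mul : β → β → β) : {m : ℕ} → (Fin (m + 1) → β) → β
  | 0, y => y 0
  | (m+1), y => mul (lassoc mul (Fin.init y)) (y (Fin.last (m+1)))

/-- `A` has a representation of degree `n`. -/
def HasRepOfDegree (A : Algebra σ) (n : ℕ) : Prop :=
  ∃ (z : A.carrier) (r : (Fin 2 → A.carrier) → A.carrier),
    IsPolynomial A r ∧ (∀ x : A.carrier, r ![z, x] = x) ∧ (∀ x : A.carrier, r ![x, z] = x) ∧
    ∀ (k : ℕ) (f : (Fin k → A.carrier) → A.carrier), IsPolynomial A f →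
      ∃ (c : A.carrier) (R : ℕ → (Fin k → A.carrier) → A.carrier),
        (∀ m : ℕ, 1 ≤ m → m ≤ min k n →
          ∃ (l : List (Finset (Fin k)))
            (t : (S : Finset (Fin k)) → (Fin S.card → A.carrier) → A.carrier),
            l.Nodup ∧
            (∀ S : Finset (Fin k), S ∈ l ↔ S.card = m) ∧
            (∀ S ∈ l, IsPolynomial A (t S) ∧ Absorbs A (t S) (fun _ => z) z) ∧
            (∀ x : Fin k → A.carrier,
              R m x = lprodList (fun u v => r ![u, v]) z
                (l.map (fun S => t S (fun j => x ((S.orderIsoOfFin rfl j).val)))))) ∧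
        ∀ x : Fin k → A.carrier,
          f x = lprodFrom (fun u v => r ![u, v]) c
            ((List.range' 1 (min k n)).map (fun m => R m x))

/-- Products of `0`-absorbing polynomials (of arities between `lo` and `hi`)
in a given set of variables. -/
inductive ProdOfAbs {ι : Type} {ar : ι → ℕ} {α : Type} (L : ExpLoop ι ar α)
    (lo hi : ℕ) {I : Type} : ((I → α) → α) → Prop
  | base {p : ℕ} (h : (Fin p → α) → α) (sel : Fin p → I) :
      lo ≤ p → p ≤ hi → IsPolynomial L.toAlgebra h →
      Absorbs L.toAlgebra h (fun _ => L.zero) L.zero →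
      ProdOfAbs L lo hi (fun v => h (fun j => v (sel j)))
  | mul {F G : (I → α) → α} :
      ProdOfAbs L lo hi F → ProdOfAbs L lo hi G →
      ProdOfAbs L lo hi (fun v => L.mul (F v) (G v))

/-- The terms `q_m` (for `m ≥ 2`, `qSeq q (m-2)` is `q_m`):
`q₂ := q`, `q_{m+1}(x,y,z) := q(x, q_m(x,y,y), q_m(x,y,z))`. -/
def qSeq (q : Term σ (Fin 3)) : ℕ → Term σ (Fin 3)
  | 0 => q
  | (k+1) => q.subst ![Term.var 0, (qSeq q k).subst ![Term.var 0, Term.var 1, Term.var 1], qSeq q k]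


/-! ### Auxiliary material -/

theorem IsPolynomial.comp {A : Algebra σ} {n k : ℕ} {p : (Fin n → A.carrier) → A.carrier}
    (hp : IsPolynomial A p) (q : Fin n → (Fin k → A.carrier) → A.carrier)
    (hq : ∀ i, IsPolynomial A (q i)) : IsPolynomial A (fun x => p (fun i => q i x)) := by
  induction hp with
  | proj i => exact hq i
  | const a => exact .const a
  | app o g _ ih => exact .app o _ ih

theorem Con.poly {A : Algebra σ} (c : Con A) {n : ℕ} {p : (Fin n → A.carrier) → A.carrier}
    (hp : IsPolynomial A p) {x y : Fin n → A.carrier} (h : ∀ i, c.r (x i) (y i)) :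
    c.r (p x) (p y) := by
  induction hp with
  | proj i => exact h i
  | const a => exact c.refl a
  | app o g _ ih => exact c.compat o _ _ ih

theorem Con.ext' {A : Algebra σ} {c d : Con A} (h : ∀ a b, c.r a b ↔ d.r a b) : c = d := by
  have : c.r = d.r := by funext a b; exact propext (h a b)
  cases c; cases d; cases this; rfl

def Pol1 (A : Algebra σ) (f : A.carrier → A.carrier) : Prop :=
  IsPolynomial A (fun x : Fin 1 → A.carrier => f (x 0))

def Pol2 (A : Algebra σ) (f : A.carrier → A.carrier → A.carrier) : Prop :=
  IsPolynomial A (fun x : Fin 2 → A.carrier => f (x 0) (x 1))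

def Pol3 (A : Algebra σ) (f : A.carrier → A.carrier → A.carrier → A.carrier) : Prop :=
  IsPolynomial A (fun x : Fin 3 → A.carrier => f (x 0) (x 1) (x 2))

section comps
variable {A : Algebra σ} {n : ℕ}

theorem Pol1.ap {f} (hf : Pol1 A f) {u : (Fin n → A.carrier) → A.carrier}
    (hu : IsPolynomial A u) : IsPolynomial A (fun x => f (u x)) :=
  IsPolynomial.comp hf (fun _ => u) (fun _ => hu)

theorem Pol2.ap {f} (hf : Pol2 A f) {u v : (Fin n → A.carrier) → A.carrier}
    (hu : IsPolynomial A u) (hv : IsPolynomial A v) : IsPolynomial A (fun x => f (u x) (v x)) :=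
  IsPolynomial.comp hf ![u, v] (by intro i; fin_cases i <;> assumption)

theorem Pol3.ap {f} (hf : Pol3 A f) {u v w : (Fin n → A.carrier) → A.carrier}
    (hu : IsPolynomial A u) (hv : IsPolynomial A v) (hw : IsPolynomial A w) :
    IsPolynomial A (fun x => f (u x) (v x) (w x)) :=
  IsPolynomial.comp hf ![u, v, w] (by intro i; fin_cases i <;> assumption)

theorem Pol2.iter {f} (hf : Pol2 A f) {u v : (Fin n → A.carrier) → A.carrier}
    (hu : IsPolynomial A u) (hv : IsPolynomial A v) (k : ℕ) :
    IsPolynomial A (fun x => (f (v x))^[k] (u x)) := by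
  induction k with
  | zero => exact hu
  | succ k ih =>
    simp only [Function.iterate_succ_apply']
    exact hf.ap hv ih

theorem Pol1.iter {f} (hf : Pol1 A f) (k : ℕ) : Pol1 A (f^[k]) := by
  induction k with
  | zero => exact .proj 0
  | succ k ih =>
    unfold Pol1
    simp only [Function.iterate_succ_apply']
    exact hf.ap ih

end comps

theorem hybrid {X : Type} {N : ℕ} (K : X → X → Prop) (E : (Fin N → X) → (Fin N → X) → Prop)
    (hrefl : ∀ x, E x x) (htrans : ∀ x y z, E x y → E y z → E x z)
    (hstep : ∀ x i v, K (x i) v → E x (Function.update x i v))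
    (x y : Fin N → X) (h : ∀ i, K (x i) (y i)) : E x y := by
  classical
  have key : ∀ s : Finset (Fin N), E x (s.piecewise y x) := by
    intro s
    induction s using Finset.induction_on with
    | empty => simpa using hrefl x
    | insert j s hj ih =>
      rw [Finset.piecewise_insert]
      refine htrans _ _ _ ih (hstep _ _ _ ?_)
      rw [Finset.piecewise_eq_of_notMem _ _ _ hj]
      exact h j
  simpa using key Finset.univ

/-- The congruence determined by a family of equivalence relations closed under translations. -/
def transCon (A : Algebra σ) (S : Set (A.carrier → A.carrier → Prop))
    (hS : ∀ s ∈ S, Equivalence s)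
    (hcl : ∀ s ∈ S, ∀ (o : σ.ops) (x : Fin (σ.arity o) → A.carrier) (j : Fin (σ.arity o)),
      (fun u v => s (A.interp o (Function.update x j u)) (A.interp o (Function.update x j v))) ∈ S) :
    Con A where
  r u v := ∀ s ∈ S, s u v
  refl a s hs := (hS s hs).refl a
  symm h s hs := (hS s hs).symm (h s hs)
  trans h h' s hs := (hS s hs).trans (h s hs) (h' s hs)
  compat o x y h := by
    refine hybrid (fun u v => ∀ s ∈ S, s u v)
      (fun x y => ∀ s ∈ S, s (A.interp o x) (A.interp o y)) ?_ ?_ ?_ x y h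
    · intro x s hs; exact (hS s hs).refl _
    · intro x y z h h' s hs; exact (hS s hs).trans (h s hs) (h' s hs)
    · intro x i v hv s hs
      have := hv _ (hcl s hs o x i)
      simpa using this

theorem transl_poly (A : Algebra σ) (o : σ.ops) (x : Fin (σ.arity o) → A.carrier)
    (j : Fin (σ.arity o)) : Pol1 A (fun u => A.interp o (Function.update x j u)) := by
  refine IsPolynomial.app o (fun i y => Function.update x j (y 0) i) ?_
  intro i
  by_cases h : i = j
  · subst h
    simp only [Function.update_self]
    exact .proj 0
  · simp only [Function.update_of_ne h]
    exact .const _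

/-- Largest congruence inside an equivalence relation. -/
def largest (A : Algebra σ) (R : A.carrier → A.carrier → Prop) (hR : Equivalence R) : Con A :=
  transCon A {s | ∃ t, Pol1 A t ∧ s = fun u v => R (t u) (t v)}
    (by
      rintro s ⟨t, _, rfl⟩
      exact ⟨fun _ => hR.refl _, fun h => hR.symm h, fun h h' => hR.trans h h'⟩)
    (by
      rintro s ⟨t, ht, rfl⟩ o x j
      exact ⟨fun u => t (A.interp o (Function.update x j u)),
        ht.ap (transl_poly A o x j), rfl⟩)

theorem largest_iff {A : Algebra σ} {R : A.carrier → A.carrier → Prop} {hR : Equivalence R}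
    {u v : A.carrier} : (largest A R hR).r u v ↔ ∀ t, Pol1 A t → R (t u) (t v) :=
  ⟨fun h t ht => h _ ⟨t, ht, rfl⟩, by rintro h s ⟨t, ht, rfl⟩; exact h t ht⟩

/-! ### Neutrality of some commutator implies meet-semidistributivity -/

inductive Tw {A : Algebra σ} (α : Con A) : (A.carrier → A.carrier) → (A.carrier → A.carrier) → Prop
  | id : Tw α (fun u => u) (fun u => u)
  | const {a b : A.carrier} : α.r a b → Tw α (fun _ => a) (fun _ => b)
  | app (o : σ.ops) (P Q : Fin (σ.arity o) → A.carrier → A.carrier) :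
      (∀ j, Tw α (P j) (Q j)) →
      Tw α (fun u => A.interp o (fun j => P j u)) (fun u => A.interp o (fun j => Q j u))

theorem Tw.comp {A : Algebra σ} {α : Con A} {P Q P' Q'} (h : Tw α P Q) (h' : Tw α P' Q') :
    Tw α (fun u => P (P' u)) (fun u => Q (Q' u)) := by
  induction h with
  | id => exact h'
  | const h => exact .const h
  | app o P Q _ ih => exact .app o _ _ ih

theorem Tw.poly {A : Algebra σ} {α : Con A} {N : ℕ} {p : (Fin N → A.carrier) → A.carrier}
    (hp : IsPolynomial A p) (X Y : Fin N → A.carrier → A.carrier) (h : ∀ i, Tw α (X i) (Y i)) :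
    Tw α (fun u => p (fun i => X i u)) (fun u => p (fun i => Y i u)) := by
  induction hp with
  | proj i => exact h i
  | const a => exact .const (α.refl a)
  | app o g _ ih => exact .app o _ _ ih

theorem Tw.rel {A : Algebra σ} {α : Con A} {P Q} (h : Tw α P Q) (u : A.carrier) :
    α.r (P u) (Q u) := by
  induction h with
  | id => exact α.refl u
  | const h => exact h
  | app o P Q _ ih => exact α.compat o _ _ ih

theorem Tw.cong {A : Algebra σ} {α : Con A} {P Q} (h : Tw α P Q) (β : Con A) {u v : A.carrier}
    (huv : β.r u v) : β.r (P u) (P v) ∧ β.r (Q u) (Q v) := by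
  induction h with
  | id => exact ⟨huv, huv⟩
  | const h => exact ⟨β.refl _, β.refl _⟩
  | app o P Q _ ih => exact ⟨β.compat o _ _ fun i => (ih i).1, β.compat o _ _ fun i => (ih i).2⟩

def twCon {A : Algebra σ} (α δ : Con A) : Con A :=
  transCon A {s | ∃ P Q, Tw α P Q ∧ s = fun u v => (δ.r (P u) (Q u) ↔ δ.r (P v) (Q v))}
    (by
      rintro s ⟨P, Q, _, rfl⟩
      exact ⟨fun _ => Iff.rfl, fun h => h.symm, fun h h' => h.trans h'⟩)
    (by
      rintro s ⟨P, Q, h, rfl⟩ o x j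
      refine ⟨fun u => P (A.interp o (Function.update x j u)),
        fun u => Q (A.interp o (Function.update x j u)), h.comp ?_, rfl⟩
      refine Tw.app o (fun i u => Function.update x j u i) (fun i u => Function.update x j u i) ?_
      intro i
      by_cases h : i = j
      · subst h
        simp only [Function.update_self]
        exact .id
      · simp only [Function.update_of_ne h]
        exact .const (α.refl _))

theorem le_twCon {A : Algebra σ} (α β : Con A) {u v : A.carrier} (h : β.r u v) :
    (twCon α (Con.inf α β)).r u v := by
  rintro s ⟨P, Q, hT, rfl⟩
  have h1 := hT.cong β h
  have h2 := hT.rel u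
  have h3 := hT.rel v
  exact ⟨fun h => ⟨h3, β.trans (β.symm h1.1) (β.trans h.2 h1.2)⟩,
    fun h => ⟨h2, β.trans h1.1 (β.trans h.2 (β.symm h1.2))⟩⟩

theorem tw_vec {A : Algebra σ} {α δ : Con A} {N : ℕ} {p : (Fin N → A.carrier) → A.carrier}
    (hp : IsPolynomial A p) (G : Fin N → Prop) [DecidablePred G] (s t : Fin N → A.carrier)
    (hst : ∀ i, ¬ G i → α.r (s i) (t i)) (x y : Fin N → A.carrier)
    (hxy : ∀ i, G i → (twCon α δ).r (x i) (y i))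
    (h : δ.r (p fun i => if G i then x i else s i) (p fun i => if G i then x i else t i)) :
    δ.r (p fun i => if G i then y i else s i) (p fun i => if G i then y i else t i) := by
  have key := hybrid (twCon α δ).r
    (fun x y => δ.r (p fun i => if G i then x i else s i) (p fun i => if G i then x i else t i) ↔
      δ.r (p fun i => if G i then y i else s i) (p fun i => if G i then y i else t i))
    (fun _ => Iff.rfl) (fun _ _ _ h h' => h.trans h')
    (by
      intro x i v hv
      have hT : Tw α (fun u => p fun j => if G j then Function.update x i u j else s j)
          (fun u => p fun j => if G j then Function.update x i u j else t j) := by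
        refine Tw.poly hp (fun j u => if G j then Function.update x i u j else s j)
          (fun j u => if G j then Function.update x i u j else t j) ?_
        intro j
        by_cases hj : G j
        · simp only [hj, if_true]
          by_cases hij : j = i
          · subst hij
            simp only [Function.update_self]
            exact .id
          · simp only [Function.update_of_ne hij]
            exact .const (α.refl _)
        · simp only [hj, if_false]
          exact .const (hst j hj)
      have := hv _ ⟨_, _, hT, rfl⟩
      simpa using this)
    x (fun i => if G i then y i else x i)
    (by
      intro i
      by_cases hi : G i
      · simpa [hi] using hxy i hi
      · simpa [hi] using (twCon α δ).refl _)
  have h2 := key.1 h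
  have e1 : ∀ s : Fin N → A.carrier,
      (fun i => if G i then (if G i then y i else x i) else s i) =
      fun i => if G i then y i else s i := by
    intro s; funext i; by_cases hi : G i <;> simp [hi]
  simpa only [e1] using h2

theorem neutral_imp_sd {A : Algebra σ} (m : ℕ)
    (hN : ∀ α : Fin (m + 1 + 1) → Con A, commList α = Con.sInf (Set.range α))
    (α β γ : Con A) (h : Con.inf α β = Con.inf α γ) :
    Con.inf α β = Con.inf α (Con.sup β γ) := by
  set δ := Con.inf α β with hδ
  have hsup : Con.sup β γ ≤ twCon α δ := by
    intro a b hab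
    refine hab (twCon α δ) ?_
    rintro ⟨u, v⟩ (h1 | h1)
    · exact le_twCon α β h1
    · have := le_twCon α γ h1
      rwa [← h] at this
  let Γ : Fin (m + 1 + 1) → Con A := fun j => if j = 0 then Con.sup β γ else α
  have hC : Centralizes (fun j : Fin (m + 1) => Γ j.castSucc) (Γ (Fin.last (m + 1))) δ := by
    intro N p hp g a b hab hε
    have hΓ : ∀ j : Fin (m + 1 + 1), (Fin.lastCases (motive := fun _ => Con A)
        (Γ (Fin.last (m + 1))) (fun j : Fin (m + 1) => Γ j.castSucc) j) = Γ j := by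
      intro j
      refine Fin.lastCases ?_ (fun j => ?_) j <;> simp
    simp only [hΓ] at hab
    let sv : Bool → Fin N → A.carrier :=
      fun w => chooseVec g a b (Fin.lastCases (motive := fun _ => Bool) w fun _ => true)
    have e0 : ∀ w, chooseVec g a b (Fin.lastCases (motive := fun _ => Bool) w
        (fun j : Fin (m + 1) => decide (j ≠ 0))) =
        fun i => if g i = 0 then a i else sv w i := by
      intro w; funext i
      simp only [chooseVec, sv]
      generalize g i = j
      induction j using Fin.lastCases with
      | last => simp
      | cast j =>
        by_cases hj : j = 0
        · subst hj
          rw [Fin.lastCases_castSucc]; simp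
        · simp [hj]
    have e1 : ∀ w, sv w = fun i => if g i = 0 then b i else sv w i := by
      intro w; funext i
      by_cases hi : g i = 0
      · simp only [hi, if_true, sv, chooseVec]
        have : (0 : Fin (m + 1 + 1)) = Fin.castSucc 0 := rfl
        rw [this, Fin.lastCases_castSucc]; rfl
      · simp [hi]
    have hne := hε (fun j => decide (j ≠ 0)) (by
      intro h; have := congrFun h 0; simp at this)
    rw [e0, e0] at hne
    change δ.r (p (sv false)) (p (sv true))
    rw [e1 false, e1 true]
    refine tw_vec (α := α) hp (fun i => g i = 0) (sv false) (sv true) ?_ a b ?_ hne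
    · intro i hi
      have hα : α.r (a i) (b i) := by simpa [Γ, hi] using hab i
      simp only [sv, chooseVec]
      split_ifs
      exacts [α.refl _, α.symm hα, hα, α.refl _]
    · intro i hi
      have : (Con.sup β γ).r (a i) (b i) := by
        simpa only [Γ, hi, if_true] using hab i
      exact hsup _ _ this
  apply Con.ext'
  intro a b
  constructor
  · intro hab
    exact ⟨hab.1, fun e he => he (a, b) (Or.inl hab.2)⟩
  · intro hab
    have h1 : (commList Γ).r a b := by
      rw [hN]
      rintro _ ⟨j, rfl⟩
      by_cases hj : j = 0
      · simpa only [Γ, hj, if_true] using hab.2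
      · simpa only [Γ, hj, if_false] using hab.1
    exact h1 δ hC

/-! ### Minimal sets -/

theorem iter_id {X : Type} [Finite X] (S : Set X) :
    ∃ k : ℕ, ∀ f : X → X, Set.MapsTo f S S → Set.InjOn f S → ∀ x ∈ S, f (f^[k] x) = x := by
  classical
  have : Fintype S := Fintype.ofFinite S
  refine ⟨Fintype.card (Equiv.Perm S) - 1, ?_⟩
  intro f hm hi x hx
  have hpos : 0 < Fintype.card (Equiv.Perm S) := Fintype.card_pos
  let φ : S → S := hm.restrict f S S
  have hφ : Function.Bijective φ := Finite.injective_iff_bijective.1 (hm.restrict_inj.2 hi)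
  let π : Equiv.Perm S := Equiv.ofBijective φ hφ
  have h1 : π ^ Fintype.card (Equiv.Perm S) = 1 := pow_card_eq_one
  have h2 : ∀ k : ℕ, ∀ y : S, ((π ^ k) y : X) = f^[k] y := by
    intro k
    induction k with
    | zero => intro y; rfl
    | succ k ih =>
      intro y
      rw [pow_succ', Function.iterate_succ_apply', ← ih]
      rfl
  have h3 := h2 (Fintype.card (Equiv.Perm S)) ⟨x, hx⟩
  rw [h1] at h3
  rw [← Function.iterate_succ_apply' f, Nat.succ_eq_add_one, Nat.sub_add_cancel hpos]
  exact h3.symm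

/-- `e` is an idempotent unary polynomial whose image is a minimal set for `θ`. -/
structure MinSet (A : Algebra σ) (θ : Con A) (e : A.carrier → A.carrier) : Prop where
  pol : Pol1 A e
  idem : ∀ x, e (e x) = e x
  ne : ∃ a b, θ.r a b ∧ e a = a ∧ e b = b ∧ a ≠ b
  min : ∀ f, Pol1 A f → (∀ x, e (f x) = f x) →
    Set.InjOn f {x | e x = x} ∨ ∀ x y, e x = x → e y = y → θ.r x y → f x = f y

theorem Con.pol1 {A : Algebra σ} (c : Con A) {f} (hf : Pol1 A f) {u v} (h : c.r u v) :
    c.r (f u) (f v) := c.poly hf (x := fun _ => u) (y := fun _ => v) (fun _ => h)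

theorem Con.pol2 {A : Algebra σ} (c : Con A) {f} (hf : Pol2 A f) {u v u' v'} (h : c.r u v)
    (h' : c.r u' v') :
    c.r (f u u') (f v v') := c.poly hf (x := ![u, u']) (y := ![v, v'])
      (by intro i; fin_cases i <;> assumption)

theorem exists_minSet (A : Algebra σ) [Finite A.carrier] (θ : Con A)
    (hne : ∃ a b, θ.r a b ∧ a ≠ b)
    (hatom : ∀ c : Con A, c ≤ θ → (∃ a b, c.r a b ∧ a ≠ b) → θ ≤ c) :
    ∃ e, MinSet A θ e := by
  classical
  have hex : ∃ k : ℕ, ∃ f, Pol1 A f ∧ (∃ a b, θ.r a b ∧ f a ≠ f b) ∧ (Set.range f).ncard = k := by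
    obtain ⟨a, b, hab, hn⟩ := hne
    exact ⟨_, fun x => x, .proj 0, ⟨a, b, hab, hn⟩, rfl⟩
  obtain ⟨f, hf, ⟨a, b, hab, hfab⟩, hk⟩ := Nat.find_spec hex
  have hmin : ∀ g, Pol1 A g → (∃ a b, θ.r a b ∧ g a ≠ g b) →
      (Set.range f).ncard ≤ (Set.range g).ncard := by
    intro g hg hne
    rw [hk]
    exact Nat.find_min' hex ⟨g, hg, hne, rfl⟩
  -- find g
  have hg : ∃ g, Pol1 A g ∧ f (g (f a)) ≠ f (g (f b)) := by
    by_contra hcon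
    push Not at hcon
    let ρ := largest A (fun u v => f u = f v) ⟨fun _ => rfl, fun h => h.symm, fun h h' => h.trans h'⟩
    have h1 : θ ≤ Con.inf ρ θ := by
      refine hatom _ (fun _ _ h => h.2) ⟨f a, f b, ⟨?_, θ.pol1 hf hab⟩, hfab⟩
      exact largest_iff.2 hcon
    exact hfab (largest_iff.1 (h1 a b hab).1 (fun x => x) (.proj 0))
  obtain ⟨g, hgp, hgne⟩ := hg
  have surj : ∀ h, Pol1 A h → (∀ x, h x ∈ Set.range f) →
      (∃ a b, θ.r a b ∧ h (f a) ≠ h (f b)) → Set.InjOn h (Set.range f) := by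
    intro h hh hr hne
    refine Set.injOn_of_ncard_image_eq ?_ (Set.toFinite _)
    have h1 := hmin (fun x => h (f x)) (hh.ap hf) hne
    have h2 : (Set.range fun x => h (f x)) = h '' Set.range f := by
      rw [← Set.range_comp]; rfl
    rw [h2] at h1
    refine le_antisymm (Set.ncard_image_le (Set.toFinite _)) h1
  obtain ⟨k, hkk⟩ := iter_id (Set.range f)
  let h : A.carrier → A.carrier := fun x => f (g x)
  have hh : Pol1 A h := hf.ap hgp
  have hid := hkk h (fun x _ => ⟨_, rfl⟩) (surj h hh (fun x => ⟨_, rfl⟩) ⟨a, b, hab, hgne⟩)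
  let e : A.carrier → A.carrier := fun x => h (h^[k] x)
  have he : Pol1 A e := hh.ap (hh.iter k)
  have her : ∀ x, e x ∈ Set.range f := fun x => ⟨_, rfl⟩
  have hfix : ∀ x, e x = x ↔ x ∈ Set.range f := fun x => ⟨fun hx => hx ▸ her x, hid x⟩
  refine ⟨e, he, fun x => (hfix _).2 (her x), ⟨f a, f b, θ.pol1 hf hab, (hfix _).2 ⟨_, rfl⟩,
    (hfix _).2 ⟨_, rfl⟩, hfab⟩, ?_⟩
  intro f' hf' hr
  by_cases hc : ∀ x y, e x = x → e y = y → θ.r x y → f' x = f' y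
  · exact Or.inr hc
  left
  push Not at hc
  obtain ⟨x, y, hx, hy, hxy, hne'⟩ := hc
  have hU : {x | e x = x} = Set.range f := Set.ext hfix
  rw [hU]
  -- the map `f' ∘ e` is non-collapsing
  have h1 := hmin (fun x => f' (e x)) (hf'.ap he) ⟨x, y, hxy, by
    change f' (e x) ≠ f' (e y)
    rw [hx, hy]; exact hne'⟩
  refine Set.injOn_of_ncard_image_eq ?_ (Set.toFinite _)
  have h2 : (Set.range fun x => f' (e x)) = f' '' Set.range f := by
    have : Set.range e = Set.range f := by
      ext z
      exact ⟨by rintro ⟨w, rfl⟩; exact her w, fun hz => ⟨z, (hfix z).2 hz⟩⟩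
    rw [← this, ← Set.range_comp]; rfl
  rw [h2] at h1
  exact le_antisymm (Set.ncard_image_le (Set.toFinite _)) h1

/-! ### The twin lemma -/

theorem fold_poly {A : Algebra σ} {N : ℕ} {f} (hf : Pol2 A f) (l : List (Fin N))
    {u : (Fin N → A.carrier) → A.carrier} (hu : IsPolynomial A u) :
    IsPolynomial A (fun v => l.foldl (fun acc j => f acc (v j)) (u v)) := by
  induction l generalizing u with
  | nil => exact hu
  | cons j l ih => exact ih (u := fun v => f (u v) (v j)) (hf.ap hu (.proj j))

theorem fold_zero {X I : Type} (f : X → X → X) (z c d : X) (h1 : f z c = z) (h2 : f z d = z)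
    (v : I → X) (l : List I) (hv : ∀ j ∈ l, v j = c ∨ v j = d) :
    l.foldl (fun acc j => f acc (v j)) z = z := by
  induction l with
  | nil => rfl
  | cons j l ih =>
    have : f z (v j) = z := by
      rcases hv j (by simp) with h | h <;> rw [h] <;> assumption
    rw [List.foldl_cons, this]
    exact ih (fun j hj => hv j (by simp [hj]))

theorem fold_one {X I : Type} (f : X → X → X) (z o c d : X) (h1 : f z c = z) (h2 : f z d = z)
    (h3 : f o d = z) (h4 : f o c = o)
    (v : I → X) (l : List I) (hv : ∀ j ∈ l, v j = c ∨ v j = d) (hd : ∃ j ∈ l, v j = d) :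
    l.foldl (fun acc j => f acc (v j)) o = z := by
  induction l with
  | nil => simp at hd
  | cons j l ih =>
    have hv' : ∀ j ∈ l, v j = c ∨ v j = d := fun j hj => hv j (by simp [hj])
    rw [List.foldl_cons]
    by_cases hj : v j = d
    · rw [hj, h3]
      exact fold_zero f z c d h1 h2 v l hv'
    · rw [(hv j (by simp)).resolve_right hj, h4]
      refine ih hv' ?_
      obtain ⟨i, hi, hid⟩ := hd
      rcases List.mem_cons.1 hi with rfl | hi
      · exact absurd hid hj
      · exact ⟨i, hi, hid⟩

theorem fold_all {X I : Type} (f : X → X → X) (o c : X) (h4 : f o c = o)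
    (v : I → X) (l : List I) (hv : ∀ j ∈ l, v j = c) :
    l.foldl (fun acc j => f acc (v j)) o = o := by
  induction l with
  | nil => rfl
  | cons j l ih =>
    rw [List.foldl_cons, hv j (by simp), h4]
    exact ih (fun j hj => hv j (by simp [hj]))

theorem no_meet {A : Algebra σ} {θ : Con A} {m : ℕ}
    (hC : Centralizes (fun _ : Fin (m + 1) => θ) θ Con.bot)
    {f} (hf : Pol2 A f) {c d z o : A.carrier} (hcd : θ.r c d) (hzo : θ.r z o)
    (h1 : f z c = z) (h2 : f o c = o) (h3 : f z d = z) (h4 : f o d = z) : z = o := by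
  let l : List (Fin (m + 1 + 1)) := (List.finRange (m + 1)).map Fin.castSucc
  let P : (Fin (m + 1 + 1) → A.carrier) → A.carrier :=
    fun v => l.foldl (fun acc j => f acc (v j)) (v (Fin.last _))
  have hP : IsPolynomial A P := fold_poly hf l (.proj _)
  let a : Fin (m + 1 + 1) → A.carrier :=
    Fin.lastCases (motive := fun _ => A.carrier) z (fun _ => d)
  let b : Fin (m + 1 + 1) → A.carrier :=
    Fin.lastCases (motive := fun _ => A.carrier) o (fun _ => c)
  have hlast : ∀ w ε, chooseVec (fun i => i) a b (Fin.lastCases (motive := fun _ => Bool) w ε)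
      (Fin.last (m + 1)) = if w then o else z := by
    intro w ε; simp [chooseVec, a, b]
  have hcast : ∀ w ε j, chooseVec (fun i => i) a b (Fin.lastCases (motive := fun _ => Bool) w ε)
      (Fin.castSucc j) = if ε j then c else d := by
    intro w ε j; simp [chooseVec, a, b]
  have hor : ∀ w ε, ∀ j ∈ l, chooseVec (fun i => i) a b
      (Fin.lastCases (motive := fun _ => Bool) w ε) j = c ∨ chooseVec (fun i => i) a b
      (Fin.lastCases (motive := fun _ => Bool) w ε) j = d := by
    intro w ε j hj
    obtain ⟨j, _, rfl⟩ := List.mem_map.1 hj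
    rw [hcast]
    split_ifs <;> simp
  have key := hC _ P hP (fun i => i) a b
    (by
      intro i
      refine Fin.lastCases ?_ (fun i => ?_) i
      · simpa [a, b] using hzo
      · simpa [a, b] using θ.symm hcd)
    (by
      intro ε hε
      have hz : ∃ j, ε j = false := by
        by_contra hcon
        push Not at hcon
        exact hε (funext fun j => by simpa using hcon j)
      obtain ⟨j, hj⟩ := hz
      change P _ = P _
      have e1 : P (chooseVec (fun i => i) a b
          (Fin.lastCases (motive := fun _ => Bool) false ε)) = z := by
        simp only [P, hlast]
        exact fold_zero f z c d h1 h3 _ l (hor _ _)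
      have e2 : P (chooseVec (fun i => i) a b
          (Fin.lastCases (motive := fun _ => Bool) true ε)) = z := by
        simp only [P, hlast]
        refine fold_one f z o c d h1 h3 h4 h2 _ l (hor _ _) ⟨j.castSucc, ?_, ?_⟩
        · exact List.mem_map.2 ⟨j, List.mem_finRange j, rfl⟩
        · rw [hcast, hj]; rfl
      rw [e1, e2])
  change P _ = P _ at key
  have e1 : ∀ w, P (chooseVec (fun i => i) a b
      (Fin.lastCases (motive := fun _ => Bool) w fun _ => true)) = if w then o else z := by
    intro w
    simp only [P, hlast]
    refine fold_all f _ c ?_ _ l ?_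
    · split_ifs <;> assumption
    · intro j hj
      obtain ⟨j, _, rfl⟩ := List.mem_map.1 hj
      rw [hcast]; rfl
  rw [e1, e1] at key
  simpa using key

theorem twin {A : Algebra σ} [Finite A.carrier] {θ : Con A} {m : ℕ}
    (hC : Centralizes (fun _ : Fin (m + 1) => θ) θ Con.bot) {e} (he : MinSet A θ e)
    {f} (hf : Pol2 A f) (hef : ∀ x y, e (f x y) = f x y) {c d : A.carrier} (hcd : θ.r c d)
    (hinj : Set.InjOn (fun x => f x c) {x | e x = x}) :
    Set.InjOn (fun x => f x d) {x | e x = x} := by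
  have hpd : Pol1 A (fun x => f x d) := hf.ap (.proj 0) (.const d)
  rcases he.min _ hpd (fun x => hef x d) with h | hcol
  · exact h
  exfalso
  obtain ⟨k, hk⟩ := iter_id {x | e x = x}
  have hid := hk (fun x => f x c) (fun x _ => hef x c) hinj
  let F : A.carrier → A.carrier → A.carrier := fun x y => f ((fun x => f x y)^[k] x) y
  have hsw : Pol2 A (fun y x => f x y) := hf.ap (.proj 1) (.proj 0)
  have hF : Pol2 A F := hf.ap (hsw.iter (.proj 0) (.proj 1) k) (.proj 1)
  have heF : ∀ x y, e (F x y) = F x y := fun x y => hef _ _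
  have hFc : ∀ x, e x = x → F x c = x := hid
  have hFd : ∀ x y, e x = x → e y = y → θ.r x y → F x d = F y d := by
    intro x y hx hy hxy
    have gen : ∀ φ : A.carrier → A.carrier, φ x = φ y → φ (φ^[k] x) = φ (φ^[k] y) := by
      intro φ h
      rw [← Function.iterate_succ_apply' φ, ← Function.iterate_succ_apply' φ,
        Function.iterate_succ_apply, Function.iterate_succ_apply, h]
    exact gen (fun x => f x d) (hcol x y hx hy hxy)
  obtain ⟨a, b, hab, ha, hb, hne⟩ := he.ne
  set z := F a d with hz
  have hzU : e z = z := heF _ _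
  have haz : θ.r a z := by
    have := θ.pol2 hF (θ.refl a) hcd
    rwa [hFc a ha] at this
  have hzd : F z d = z := (hFd a z ha hzU haz).symm
  have hall : ∀ o, e o = o → θ.r a o → z = o := by
    intro o ho hao
    refine no_meet hC hF hcd (θ.trans (θ.symm haz) hao) (hFc z hzU) (hFc o ho) hzd ?_
    exact (hFd a o ha ho hao).symm
  exact hne ((hall a ha (θ.refl a)).symm.trans (hall b hb hab))

/-! ### Polynomials on a trace -/

section trace
variable {A : Algebra σ} {θ : Con A} {m : ℕ} {e : A.carrier → A.carrier}

theorem dich [Finite A.carrier] (hC : Centralizes (fun _ : Fin (m + 1) => θ) θ Con.bot)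
    (he : MinSet A θ e) (a0 : A.carrier)
    {f} (hf : Pol3 A f) (hef : ∀ x y z, e (f x y z) = f x y z) :
    (∀ c c', θ.r a0 c → θ.r a0 c' → Set.InjOn (fun x => f x c c') {x | e x = x}) ∨
    (∀ c c' x x', θ.r a0 c → θ.r a0 c' → (e x = x ∧ θ.r a0 x) → (e x' = x' ∧ θ.r a0 x') →
      f x c c' = f x' c c') := by
  by_cases h : ∃ c c', θ.r a0 c ∧ θ.r a0 c' ∧ Set.InjOn (fun x => f x c c') {x | e x = x}
  · left
    obtain ⟨c, c', hc, hc', hi⟩ := h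
    intro d d' hd hd'
    have h1 : Set.InjOn (fun x => f x d c') {x | e x = x} :=
      twin hC he (f := fun x y => f x y c') (hf.ap (.proj 0) (.proj 1) (.const c'))
        (fun _ _ => hef _ _ _) (θ.trans (θ.symm hc) hd) hi
    exact twin hC he (f := fun x y => f x d y) (hf.ap (.proj 0) (.const d) (.proj 1))
        (fun _ _ => hef _ _ _) (θ.trans (θ.symm hc') hd') h1
  · right
    push Not at h
    intro c c' x x' hc hc' hx hx'
    rcases he.min (fun x => f x c c') (hf.ap (.proj 0) (.const c) (.const c'))
      (fun _ => hef _ _ _) with h1 | h1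
    · exact absurd h1 (h c c' hc hc')
    · exact h1 x x' hx.1 hx'.1 (θ.trans (θ.symm hx.2) hx'.2)

theorem star [Finite A.carrier] (hC : Centralizes (fun _ : Fin (m + 1) => θ) θ Con.bot)
    (he : MinSet A θ e) (a0 b0 : A.carrier) (ha0 : e a0 = a0) (hb0 : e b0 = b0)
    (hab : θ.r a0 b0) (hne : a0 ≠ b0) (N : Set A.carrier) (hN : N = {x | e x = x ∧ θ.r a0 x})
    {f g} (hf : Pol3 A f) (hef : ∀ x y z, e (f x y z) = f x y z)
    (hg : Pol3 A g) (heg : ∀ x y z, e (g x y z) = g x y z)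
    (hfN : ∀ x ∈ N, ∀ y ∈ N, ∀ z ∈ N, f x y z ∈ N)
    (hgN : ∀ x ∈ N, ∀ y ∈ N, ∀ z ∈ N, g x y z ∈ N)
    (h1 : ∀ x ∈ N, ∀ y ∈ N, f x y x = g x y x)
    (h2 : ∀ x ∈ N, ∀ z ∈ N, f x x z = g x x z) :
    ∀ x ∈ N, ∀ z ∈ N, f x z z = g x z z := by
  have haN : a0 ∈ N := by rw [hN]; exact ⟨ha0, θ.refl _⟩
  have hbN : b0 ∈ N := by rw [hN]; exact ⟨hb0, hab⟩
  have hNU : ∀ x ∈ N, x ∈ {x | e x = x} := by intro x hx; rw [hN] at hx; exact hx.1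
  -- the three dichotomies, for members of `N`
  have D : ∀ f, Pol3 A f → (∀ x y z, e (f x y z) = f x y z) →
      (∀ c ∈ N, ∀ c' ∈ N, Set.InjOn (fun x => f x c c') N) ∨
      (∀ c ∈ N, ∀ c' ∈ N, ∀ x ∈ N, ∀ x' ∈ N, f x c c' = f x' c c') := by
    intro f hf hef
    subst hN
    rcases dich hC he a0 hf hef with h | h
    · left; intro c hc c' hc'
      exact (h c c' hc.2 hc'.2).mono (fun x hx => hx.1)
    · right; intro c hc c' hc' x hx x' hx'
      exact h c c' x x' hc.2 hc'.2 hx hx'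
  have DY : ∀ f, Pol3 A f → (∀ x y z, e (f x y z) = f x y z) →
      (∀ c ∈ N, ∀ c' ∈ N, Set.InjOn (fun y => f c y c') N) ∨
      (∀ c ∈ N, ∀ c' ∈ N, ∀ x ∈ N, ∀ x' ∈ N, f c x c' = f c x' c') := fun f hf hef =>
    D (fun y x z => f x y z) (hf.ap (.proj 1) (.proj 0) (.proj 2)) (fun _ _ _ => hef _ _ _)
  have DZ : ∀ f, Pol3 A f → (∀ x y z, e (f x y z) = f x y z) →
      (∀ c ∈ N, ∀ c' ∈ N, Set.InjOn (fun z => f c c' z) N) ∨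
      (∀ c ∈ N, ∀ c' ∈ N, ∀ x ∈ N, ∀ x' ∈ N, f c c' x = f c c' x') := fun f hf hef =>
    D (fun z x y => f x y z) (hf.ap (.proj 1) (.proj 2) (.proj 0)) (fun _ _ _ => hef _ _ _)
  -- the quasigroup case
  have quasi : ∀ q, Pol2 A q → (∀ x y, e (q x y) = q x y) →
      (∀ x ∈ N, ∀ y ∈ N, q x y ∈ N) → (∀ c ∈ N, Set.InjOn (fun x => q x c) N) →
      (∀ c ∈ N, Set.InjOn (fun x => q c x) N) → ∀ x ∈ N, ∀ z ∈ N, f x z z = g x z z := by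
    intro q hq heq hqN hq1 hq2
    obtain ⟨k, hk⟩ := iter_id N
    let w : A.carrier → A.carrier := fun v => (q v)^[k] a0
    have hwN : ∀ v ∈ N, w v ∈ N := by
      intro v hv
      have : ∀ k, (q v)^[k] a0 ∈ N := by
        intro k
        induction k with
        | zero => exact haN
        | succ k ih =>
          rw [Function.iterate_succ_apply']
          exact hqN _ hv _ ih
      exact this k
    have hw : ∀ v ∈ N, q v (w v) = a0 := fun v hv =>
      hk (q v) (fun x hx => hqN v hv x hx) (hq2 v hv) a0 haN
    have hd : ∀ u ∈ N, ∀ v ∈ N, q u (w v) = a0 → u = v := by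
      intro u hu v hv h
      exact hq1 _ (hwN v hv) hu hv (h.trans (hw v hv).symm)
    let h : A.carrier → A.carrier → A.carrier → A.carrier :=
      fun x y z => q (f x y z) (w (g x y z))
    have hh : Pol3 A h := hq.ap hf (hq.iter (.const a0) hg k)
    rcases DY h hh (fun _ _ _ => heq _ _) with hi | hc
    · exfalso
      have e1 : ∀ y ∈ N, h a0 y a0 = a0 := by
        intro y hy
        simp only [h]
        rw [h1 a0 haN y hy]
        exact hw _ (hgN _ haN _ hy _ haN)
      exact hne (hi a0 haN a0 haN haN hbN ((e1 a0 haN).trans (e1 b0 hbN).symm))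
    · intro x hx z hz
      refine hd _ (hfN x hx z hz z hz) _ (hgN x hx z hz z hz) ?_
      have := hc x hx z hz z hz x hx
      refine this.trans ?_
      simp only [h]
      rw [h2 x hx z hz]
      exact hw _ (hgN _ hx _ hx _ hz)
  have quasi3 : ∀ F, Pol3 A F → (∀ x y z, e (F x y z) = F x y z) →
      (∀ x ∈ N, ∀ y ∈ N, ∀ z ∈ N, F x y z ∈ N) →
      (∀ c ∈ N, ∀ c' ∈ N, Set.InjOn (fun y => F c y c') N) →
      (∀ x ∈ N, ∀ z ∈ N, f x z z = g x z z) ∨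
      (∀ x ∈ N, ∀ z ∈ N, F x z z = F z z z) := by
    intro F hF heF hFN hy
    rcases D F hF heF with hx | hx
    · left
      exact quasi (fun u v => F u v a0) (hF.ap (.proj 0) (.proj 1) (.const a0))
        (fun _ _ => heF _ _ _) (fun x hx y hy => hFN x hx y hy a0 haN)
        (fun c hc => hx c hc a0 haN) (fun c hc => hy c hc a0 haN)
    · right
      intro x hx' z hz
      exact hx z hz z hz x hx' z hz
  rcases DY f hf hef with hfy | hfy
  · have hgy : ∀ c ∈ N, ∀ c' ∈ N, Set.InjOn (fun y => g c y c') N := by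
      rcases DY g hg heg with h | h
      · exact h
      · exfalso
        refine hne (hfy a0 haN a0 haN haN hbN ?_)
        change f a0 a0 a0 = f a0 b0 a0
        rw [h1 a0 haN a0 haN, h1 a0 haN b0 hbN]
        exact h a0 haN a0 haN a0 haN b0 hbN
    rcases quasi3 f hf hef hfN hfy with h | h
    · exact h
    rcases quasi3 g hg heg hgN hgy with h' | h'
    · exact h'
    intro x hx z hz
    rw [h x hx z hz, h' x hx z hz, h1 z hz z hz]
  · rcases DY g hg heg with h | h
    · exfalso
      refine hne (h a0 haN a0 haN haN hbN ?_)
      change g a0 a0 a0 = g a0 b0 a0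
      rw [← h1 a0 haN a0 haN, ← h1 a0 haN b0 hbN]
      exact hfy a0 haN a0 haN a0 haN b0 hbN
    · intro x hx z hz
      rw [hfy x hx z hz z hz x hx, h x hx z hz z hz x hx, h2 x hx z hz]

end trace

/-! ### The algebra of ternary polynomials -/

def polAlg (B : Algebra σ) : Algebra σ where
  carrier := {p : (Fin 3 → B.carrier) → B.carrier // IsPolynomial B p}
  interp o x := ⟨fun v => B.interp o (fun j => (x j).1 v), .app o _ (fun j => (x j).2)⟩

theorem polAlg_eval (B : Algebra σ) {X : Type} (t : Term σ X) (v : X → (polAlg B).carrier)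
    (w : Fin 3 → B.carrier) : (t.eval (polAlg B) v).1 w = t.eval B (fun i => (v i).1 w) := by
  induction t with
  | var x => rfl
  | app o t ih =>
    simp only [Term.eval]
    rw [← funext ih]
    rfl

theorem polAlg_mem {V : Algebra σ → Prop} (hV : IsVariety V) {B : Algebra σ} (hB : V B) :
    V (polAlg B) := by
  obtain ⟨E, hE⟩ := hV
  rw [hE] at hB ⊢
  intro i hi v
  apply Subtype.ext
  funext w
  rw [polAlg_eval, polAlg_eval]
  exact hB i hi _

/-- Agreement of polynomials on a set of points. -/
def agree (B : Algebra σ) (S : Set (Fin 3 → B.carrier)) : Con (polAlg B) where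
  r p q := ∀ w ∈ S, p.1 w = q.1 w
  refl _ _ _ := rfl
  symm h w hw := (h w hw).symm
  trans h h' w hw := (h w hw).trans (h' w hw)
  compat o x y h w hw := congrArg (B.interp o) (funext fun i => h i w hw)

/-- Agreement modulo `e` at the points of `S`, for the polynomials mapping `(a,a,a)` into the
`θ`-class of `a`. -/
def eRel (B : Algebra σ) (θ : Con B) (e : B.carrier → B.carrier) (a : B.carrier)
    (S : Set (Fin 3 → B.carrier)) (p q : (polAlg B).carrier) : Prop :=
  θ.r (p.1 fun _ => a) (q.1 fun _ => a) ∧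
    (θ.r a (p.1 fun _ => a) → ∀ w ∈ S, e (p.1 w) = e (q.1 w))

theorem eRel_equiv (B : Algebra σ) (θ : Con B) (e : B.carrier → B.carrier) (a : B.carrier)
    (S : Set (Fin 3 → B.carrier)) : Equivalence (eRel B θ e a S) where
  refl p := ⟨θ.refl _, fun _ _ _ => rfl⟩
  symm h := ⟨θ.symm h.1, fun ha w hw => (h.2 (θ.trans ha (θ.symm h.1)) w hw).symm⟩
  trans h h' := ⟨θ.trans h.1 h'.1, fun ha w hw =>
    (h.2 ha w hw).trans (h'.2 (θ.trans ha h.1) w hw)⟩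

theorem atom_core {V : Algebra σ → Prop} (hV : IsVariety V)
    (hSD : ∀ A : Algebra σ, V A → ∀ α β γ : Con A,
        Con.inf α β = Con.inf α γ → Con.inf α β = Con.inf α (Con.sup β γ))
    (B : Algebra σ) (hB : V B) [Finite B.carrier] (θ : Con B) {m : ℕ}
    (hC : Centralizes (fun _ : Fin (m + 1) => θ) θ Con.bot) {e} (he : MinSet B θ e) : False := by
  obtain ⟨a0, b0, hab, ha0, hb0, hne⟩ := he.ne
  let N : Set B.carrier := {x | e x = x ∧ θ.r a0 x}
  have haN : a0 ∈ N := ⟨ha0, θ.refl _⟩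
  have hbN : b0 ∈ N := ⟨hb0, hab⟩
  let Sα : Set (Fin 3 → B.carrier) := {w | ∃ x ∈ N, ∃ y ∈ N, w = ![x, y, x]}
  let Sβ : Set (Fin 3 → B.carrier) := {w | ∃ x ∈ N, ∃ z ∈ N, w = ![x, x, z]}
  let Sγ : Set (Fin 3 → B.carrier) := {w | ∃ x ∈ N, ∃ z ∈ N, w = ![x, z, z]}
  let α := agree B Sα
  let b := largest (polAlg B) _ (eRel_equiv B θ e a0 Sβ)
  let c := largest (polAlg B) _ (eRel_equiv B θ e a0 Sγ)
  have hcst : (fun _ : Fin 3 => a0) = ![a0, a0, a0] := by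
    funext i; fin_cases i <;> rfl
  -- properties of e ∘ p
  have hvec : ∀ p : (polAlg B).carrier,
      Pol3 B (fun x y z => e (p.1 ![x, y, z])) := by
    intro p
    refine he.pol.ap (IsPolynomial.comp p.2 (fun i w => ![w 0, w 1, w 2] i) ?_)
    intro i; fin_cases i
    · exact .proj 0
    · exact .proj 1
    · exact .proj 2
  have hrange : ∀ p : (polAlg B).carrier, θ.r a0 (p.1 fun _ => a0) →
      ∀ x ∈ N, ∀ y ∈ N, ∀ z ∈ N, e (p.1 ![x, y, z]) ∈ N := by
    intro p hp x hx y hy z hz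
    refine ⟨he.idem _, ?_⟩
    have h1 : θ.r (p.1 fun _ => a0) (p.1 ![x, y, z]) := by
      refine θ.poly p.2 ?_
      intro i; fin_cases i
      exacts [hx.2, hy.2, hz.2]
    have := θ.pol1 he.pol (θ.trans hp h1)
    rwa [ha0] at this
  have hβγ : ∀ p q : (polAlg B).carrier, α.r p q → eRel B θ e a0 Sβ p q →
      eRel B θ e a0 Sγ p q := by
    rintro p q h1 ⟨h2, h3⟩
    refine ⟨h2, fun hp => ?_⟩
    rintro _ ⟨x, hx, z, hz, rfl⟩
    exact star hC he a0 b0 ha0 hb0 hab hne N rfl (hvec p) (fun _ _ _ => he.idem _) (hvec q)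
      (fun _ _ _ => he.idem _) (hrange p hp) (hrange q (θ.trans hp h2))
      (fun x hx y hy => congrArg e (h1 _ ⟨x, hx, y, hy, rfl⟩))
      (fun x hx z hz => h3 hp _ ⟨x, hx, z, hz, rfl⟩) x hx z hz
  have hγβ : ∀ p q : (polAlg B).carrier, α.r p q → eRel B θ e a0 Sγ p q →
      eRel B θ e a0 Sβ p q := by
    rintro p q h1 ⟨h2, h3⟩
    refine ⟨h2, fun hp => ?_⟩
    rintro _ ⟨x, hx, z, hz, rfl⟩
    exact star hC he a0 b0 ha0 hb0 hab hne N rfl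
      (f := fun x y z => e (p.1 ![z, y, x])) (g := fun x y z => e (q.1 ![z, y, x]))
      ((hvec p).ap (.proj 2) (.proj 1) (.proj 0)) (fun _ _ _ => he.idem _)
      ((hvec q).ap (.proj 2) (.proj 1) (.proj 0))
      (fun _ _ _ => he.idem _) (fun x hx y hy z hz => hrange p hp z hz y hy x hx)
      (fun x hx y hy z hz => hrange q (θ.trans hp h2) z hz y hy x hx)
      (fun x hx y hy => congrArg e (h1 _ ⟨x, hx, y, hy, rfl⟩))
      (fun x hx z hz => h3 hp _ ⟨z, hz, x, hx, rfl⟩) z hz x hx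
  have hinf : Con.inf α b = Con.inf α c := by
    apply Con.ext'
    intro p q
    constructor
    · rintro ⟨h1, h2⟩
      refine ⟨h1, largest_iff.2 fun t ht => ?_⟩
      exact hβγ _ _ (α.pol1 ht h1) (largest_iff.1 h2 t ht)
    · rintro ⟨h1, h2⟩
      refine ⟨h1, largest_iff.2 fun t ht => ?_⟩
      exact hγβ _ _ (α.pol1 ht h1) (largest_iff.1 h2 t ht)
  have hsd := hSD _ (polAlg_mem hV hB) α b c hinf
  let π : Fin 3 → (polAlg B).carrier := fun i => ⟨fun w => w i, .proj i⟩
  have hb : b.r (π 0) (π 1) := by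
    refine largest_iff.2 fun t ht => ?_
    have h0 : (agree B Sβ).r (π 0) (π 1) := by
      rintro _ ⟨x, hx, z, hz, rfl⟩; rfl
    have h1 := (agree B Sβ).pol1 ht h0
    refine ⟨?_, fun _ w hw => congrArg e (h1 w hw)⟩
    rw [h1 _ ⟨a0, haN, a0, haN, hcst⟩]
    exact θ.refl _
  have hc : c.r (π 1) (π 2) := by
    refine largest_iff.2 fun t ht => ?_
    have h0 : (agree B Sγ).r (π 1) (π 2) := by
      rintro _ ⟨x, hx, z, hz, rfl⟩; rfl
    have h1 := (agree B Sγ).pol1 ht h0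
    refine ⟨?_, fun _ w hw => congrArg e (h1 w hw)⟩
    rw [h1 _ ⟨a0, haN, a0, haN, hcst⟩]
    exact θ.refl _
  have hmem : (Con.inf α (Con.sup b c)).r (π 0) (π 2) := by
    constructor
    · rintro _ ⟨x, hx, z, hz, rfl⟩; rfl
    · intro d hd
      exact d.trans (hd (π 0, π 1) (Or.inl hb)) (hd (π 1, π 2) (Or.inr hc))
  rw [← hsd] at hmem
  have hfin := (largest_iff.1 hmem.2 (fun x => x) (.proj 0)).2 (θ.refl a0) _
    ⟨a0, haN, b0, hbN, rfl⟩
  change e a0 = e b0 at hfin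
  rw [ha0, hb0] at hfin
  exact hne hfin

theorem Centralizes.mono {A : Algebra σ} {n : ℕ} {α α' : Fin n → Con A} {β β' δ : Con A}
    (h : Centralizes α β δ) (hα : ∀ i, α' i ≤ α i) (hβ : β' ≤ β) : Centralizes α' β' δ := by
  intro N p hp g a b hab
  refine h N p hp g a b ?_
  intro i
  have := hab i
  revert this
  generalize g i = j
  induction j using Fin.lastCases with
  | last => simpa using hβ _ _
  | cast j => simpa using hα j _ _

theorem fin_core {V : Algebra σ → Prop} (hV : IsVariety V)
    (hSD : ∀ A : Algebra σ, V A → ∀ α β γ : Con A,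
        Con.inf α β = Con.inf α γ → Con.inf α β = Con.inf α (Con.sup β γ))
    (B : Algebra σ) (hB : V B) [Finite B.carrier] (θ : Con B) {m : ℕ}
    (hC : Centralizes (fun _ : Fin (m + 1) => θ) θ Con.bot) (a b : B.carrier) (hab : θ.r a b) :
    a = b := by
  classical
  by_contra hne
  have hex : ∃ k : ℕ, ∃ c : Con B, c ≤ θ ∧ (∃ a b, c.r a b ∧ a ≠ b) ∧
      {p : B.carrier × B.carrier | c.r p.1 p.2}.ncard = k :=
    ⟨_, θ, fun _ _ h => h, ⟨a, b, hab, hne⟩, rfl⟩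
  obtain ⟨c, hcθ, hcne, hk⟩ := Nat.find_spec hex
  obtain ⟨e, he⟩ := exists_minSet B c hcne (by
    intro d hd hdne
    have h1 : {p : B.carrier × B.carrier | c.r p.1 p.2}.ncard ≤
        {p : B.carrier × B.carrier | d.r p.1 p.2}.ncard := by
      rw [hk]
      exact Nat.find_min' hex ⟨d, fun _ _ h => hcθ _ _ (hd _ _ h), hdne, rfl⟩
    have h2 := Set.eq_of_subset_of_ncard_le (s := {p : B.carrier × B.carrier | d.r p.1 p.2})
      (t := {p : B.carrier × B.carrier | c.r p.1 p.2}) (fun p hp => hd _ _ hp) h1 (Set.toFinite _)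
    intro x y hxy
    have : (x, y) ∈ {p : B.carrier × B.carrier | c.r p.1 p.2} := hxy
    rw [← h2] at this
    exact this)
  exact atom_core hV hSD B hB c (hC.mono (fun _ => hcθ) hcθ) he

/-! ### Two-generated subquotients -/

/-- The subalgebra of `A/δ` generated by the classes of `a` and `b`. -/
noncomputable def subquot (A : Algebra σ) (δ : Con A) (a b : A.carrier) : Algebra σ where
  carrier := {u : Quotient δ.toSetoid //
    ∃ t : Term σ (Fin 2), u = Quotient.mk δ.toSetoid (t.eval A ![a, b])}
  interp o x := ⟨Quotient.mk δ.toSetoid (A.interp o fun i => (x i).1.out), by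
    choose t ht using fun i => (x i).2
    refine ⟨.app o t, Quotient.sound (δ.compat o _ _ fun i => ?_)⟩
    have : δ.toSetoid.r (x i).1.out (Term.eval A ![a, b] (t i)) :=
      Quotient.exact ((Quotient.out_eq _).trans (ht i))
    exact this⟩

/-- `x` represents `u`. -/
def Repr {A : Algebra σ} {δ : Con A} {a b : A.carrier} (u : (subquot A δ a b).carrier)
    (x : A.carrier) : Prop := Quotient.mk δ.toSetoid x = u.1

section sq
variable {A : Algebra σ} {δ : Con A} {a b : A.carrier}

theorem Repr.out (u : (subquot A δ a b).carrier) : Repr u u.1.out := Quotient.out_eq _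

theorem Repr.rel {u : (subquot A δ a b).carrier} {x y} (h : Repr u x) (h' : Repr u y) :
    δ.r x y := by
  have : δ.toSetoid.r x y := Quotient.exact (h.trans h'.symm)
  exact this

theorem Repr.eq {u v : (subquot A δ a b).carrier} {x y} (h : Repr u x) (h' : Repr v y)
    (hxy : δ.r x y) : u = v := by
  apply Subtype.ext
  rw [← h, ← h']
  exact Quotient.sound hxy

theorem Repr.interp (o : σ.ops) {u : Fin (σ.arity o) → (subquot A δ a b).carrier} {x}
    (h : ∀ i, Repr (u i) (x i)) : Repr ((subquot A δ a b).interp o u) (A.interp o x) :=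
  Quotient.sound (δ.compat o _ _ fun i => (h i).rel (Repr.out _))

theorem Repr.eval {X : Type} (t : Term σ X) {v : X → (subquot A δ a b).carrier} {w}
    (h : ∀ i, Repr (v i) (w i)) : Repr (t.eval _ v) (t.eval A w) := by
  induction t with
  | var x => exact h x
  | app o t ih => exact Repr.interp o ih

theorem Repr.poly {N : ℕ} {p : (Fin N → (subquot A δ a b).carrier) → (subquot A δ a b).carrier}
    (hp : IsPolynomial _ p) : ∃ p' : (Fin N → A.carrier) → A.carrier, IsPolynomial A p' ∧
      ∀ u x, (∀ i, Repr (u i) (x i)) → Repr (p u) (p' x) := by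
  induction hp with
  | proj i => exact ⟨_, .proj i, fun u x h => h i⟩
  | const c => exact ⟨_, .const c.1.out, fun _ _ _ => Repr.out c⟩
  | app o g _ ih =>
    choose g' hg' hr using ih
    exact ⟨_, .app o g' hg', fun u x h => Repr.interp o fun i => hr i u x h⟩

theorem subquot_mem {V : Algebra σ → Prop} (hV : IsVariety V) (hA : V A) :
    V (subquot A δ a b) := by
  obtain ⟨E, hE⟩ := hV
  rw [hE] at hA ⊢
  intro i hi v
  refine Repr.eq (Repr.eval i.1 fun j => Repr.out (v j)) (Repr.eval i.2 fun j => Repr.out (v j)) ?_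
  rw [hA i hi]
  exact δ.refl _

theorem subquot_finite {V : Algebra σ → Prop} (hA : V A)
    (hfin : Finite (freeAlg V (Fin 2)).carrier) : Finite (subquot A δ a b).carrier := by
  let φ : (freeAlg V (Fin 2)).carrier → (subquot A δ a b).carrier :=
    Quotient.lift (s := vSetoid V (Fin 2))
      (fun t => ⟨Quotient.mk δ.toSetoid (t.eval A ![a, b]), t, rfl⟩)
      (by
        intro s t hst
        apply Subtype.ext
        change Quotient.mk δ.toSetoid _ = Quotient.mk δ.toSetoid _
        rw [hst A hA])
  refine Finite.of_surjective φ ?_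
  rintro ⟨u, t, ht⟩
  exact ⟨Quotient.mk _ t, Subtype.ext ht.symm⟩

def subCon (θ : Con A) (a b : A.carrier) (h : δ ≤ θ) : Con (subquot A δ a b) where
  r u v := θ.r u.1.out v.1.out
  refl _ := θ.refl _
  symm h := θ.symm h
  trans h h' := θ.trans h h'
  compat o x y hxy := by
    have h1 := θ.compat o _ _ hxy
    have hx : Repr ((subquot A δ a b).interp o x) (A.interp o fun i => (x i).1.out) :=
      Repr.interp o fun i => Repr.out _
    have hy : Repr ((subquot A δ a b).interp o y) (A.interp o fun i => (y i).1.out) :=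
      Repr.interp o fun i => Repr.out _
    exact θ.trans (h _ _ ((Repr.out _).rel hx)) (θ.trans h1 (h _ _ (hy.rel (Repr.out _))))

theorem subquot_cent {n : ℕ} {θ : Con A} (h : δ ≤ θ)
    (hC : Centralizes (fun _ : Fin n => θ) θ δ) :
    Centralizes (fun _ : Fin n => subCon θ a b h) (subCon θ a b h) Con.bot := by
  intro N p hp g u v huv hε
  obtain ⟨p', hp', hr⟩ := Repr.poly hp
  have hall : ∀ {B : Algebra σ} (c : Con B) (j : Fin (n + 1)),
      Fin.lastCases (motive := fun _ => Con B) c (fun _ => c) j = c := by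
    intro B c j
    refine Fin.lastCases ?_ (fun j => ?_) j <;> simp
  simp only [hall] at huv
  have hch : ∀ ε, Repr (p (chooseVec g u v ε))
      (p' (chooseVec g (fun i => (u i).1.out) (fun i => (v i).1.out) ε)) := by
    intro ε
    apply hr
    intro i
    simp only [chooseVec]
    split_ifs <;> exact Repr.out _
  refine Repr.eq (hch _) (hch _) (hC N p' hp' g _ _ ?_ ?_)
  · intro i
    rw [hall]
    exact huv i
  · intro ε he
    have h1 := hε ε he
    change p _ = p _ at h1
    have h2 := hch (Fin.lastCases (motive := fun _ => Bool) false ε)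
    rw [h1] at h2
    exact h2.rel (hch _)

end sq

/-! ### Assembling -/

theorem cent_last {A : Algebra σ} {n : ℕ} (α : Fin n → Con A) (β : Con A) :
    Centralizes α β β := by
  intro N p hp g a b hab _
  refine β.poly hp ?_
  intro i
  have := hab i
  revert this
  simp only [chooseVec]
  generalize g i = j
  induction j using Fin.lastCases with
  | last => simp
  | cast j => intro _; simpa using β.refl _

theorem cent_cast {A : Algebra σ} {n : ℕ} (α : Fin n → Con A) (β : Con A) (k : Fin n) :
    Centralizes α β (α k) := by
  intro N p hp g a b hab hε
  have h1 := hε (fun j => decide (j ≠ k)) (by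
    intro h; have := congrFun h k; simp at this)
  have h2 : ∀ w, (α k).r (p (chooseVec g a b (Fin.lastCases (motive := fun _ => Bool) w fun _ => true)))
      (p (chooseVec g a b (Fin.lastCases (motive := fun _ => Bool) w
        fun j => decide (j ≠ k)))) := by
    intro w
    refine (α k).poly hp ?_
    intro i
    have := hab i
    revert this
    simp only [chooseVec]
    generalize g i = j
    induction j using Fin.lastCases with
    | last => intro _; simpa using (α k).refl _
    | cast j =>
      by_cases hj : j = k
      · subst hj
        simpa using fun h => (α j).symm h
      · intro _; simpa [hj] using (α k).refl _
  exact (α k).trans (h2 false) ((α k).trans h1 ((α k).symm (h2 true)))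

theorem cent_inf {A : Algebra σ} {n : ℕ} {α : Fin n → Con A} {β δ δ' : Con A}
    (h : Centralizes α β δ) (h' : Centralizes α β δ') : Centralizes α β (Con.inf δ δ') := by
  intro N p hp g a b hab hε
  exact ⟨h N p hp g a b hab fun ε he => (hε ε he).1, h' N p hp g a b hab fun ε he => (hε ε he).2⟩

theorem sd_imp_neutral {V : Algebra σ → Prop} (hV : IsVariety V)
    (hfin : Finite (freeAlg V (Fin 2)).carrier)
    (hSD : ∀ A : Algebra σ, V A → ∀ α β γ : Con A,
        Con.inf α β = Con.inf α γ → Con.inf α β = Con.inf α (Con.sup β γ))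
    (m : ℕ) (A : Algebra σ) (hA : V A) (α : Fin (m + 1 + 1) → Con A) :
    commList α = Con.sInf (Set.range α) := by
  apply Con.ext'
  intro a b
  constructor
  · intro h
    rintro _ ⟨j, rfl⟩
    refine Fin.lastCases ?_ (fun j => ?_) j
    · exact h _ (cent_last _ _)
    · exact h _ (cent_cast (fun j : Fin (m + 1) => α j.castSucc) _ j)
  · intro hab δ hδ
    let θ := Con.sInf (Set.range α)
    have hle : ∀ j, θ ≤ α j := fun j a b h => h _ ⟨j, rfl⟩
    have h1 : Centralizes (fun _ : Fin (m + 1) => θ) θ δ :=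
      Centralizes.mono hδ (fun j => hle _) (hle _)
    have h2 : Centralizes (fun _ : Fin (m + 1) => θ) θ (Con.inf δ θ) :=
      cent_inf h1 (cent_last _ _)
    have hi : Con.inf δ θ ≤ θ := fun _ _ h => h.2
    let B := subquot A (Con.inf δ θ) a b
    have : Finite B.carrier := subquot_finite hA hfin
    let u : B.carrier := ⟨Quotient.mk _ a, .var 0, rfl⟩
    let v : B.carrier := ⟨Quotient.mk _ b, .var 1, rfl⟩
    have hu : Repr u a := rfl
    have hv : Repr v b := rfl
    have huv : (subCon θ a b hi).r u v :=
      θ.trans (hi _ _ ((Repr.out u).rel hu)) (θ.trans hab (hi _ _ (hv.rel (Repr.out v))))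
    have heq := fin_core hV hSD B (subquot_mem hV hA) _ (subquot_cent hi h2) u v huv
    rw [← heq] at hv
    exact (hu.rel hv).1

/-- Theorem 4.5 of "On Supernilpotent Algebras": for a variety whose 2-generated
free algebra is finite, congruence meet-semidistributivity is equivalent to
neutrality of the `n`-commutator for all (equivalently, some) `n ≥ 2`. -/
theorem meet_semidistributive_iff_neutral {σ : Signature} (V : Algebra σ → Prop)
    (hV : IsVariety V) (hfin : Finite (freeAlg V (Fin 2)).carrier) :
    ((∀ A : Algebra σ, V A → ∀ α β γ : Con A,
        Con.inf α β = Con.inf α γ → Con.inf α β = Con.inf α (Con.sup β γ)) ↔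
      (∀ n : ℕ, 2 ≤ n → ∀ A : Algebra σ, V A → ∀ α : Fin (n - 1 + 1) → Con A,
        commList α = Con.sInf (Set.range α))) ∧
    ((∀ n : ℕ, 2 ≤ n → ∀ A : Algebra σ, V A → ∀ α : Fin (n - 1 + 1) → Con A,
        commList α = Con.sInf (Set.range α)) ↔
      (∃ n : ℕ, 2 ≤ n ∧ ∀ A : Algebra σ, V A → ∀ α : Fin (n - 1 + 1) → Con A,
        commList α = Con.sInf (Set.range α))) := by
  have h12 : (∀ A : Algebra σ, V A → ∀ α β γ : Con A,
        Con.inf α β = Con.inf α γ → Con.inf α β = Con.inf α (Con.sup β γ)) →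
      (∀ n : ℕ, 2 ≤ n → ∀ A : Algebra σ, V A → ∀ α : Fin (n - 1 + 1) → Con A,
        commList α = Con.sInf (Set.range α)) := by
    intro hSD n hn A hA
    obtain ⟨m, rfl⟩ := Nat.exists_eq_add_of_le' hn
    exact sd_imp_neutral hV hfin hSD m A hA
  have h31 : (∃ n : ℕ, 2 ≤ n ∧ ∀ A : Algebra σ, V A → ∀ α : Fin (n - 1 + 1) → Con A,
        commList α = Con.sInf (Set.range α)) → (∀ A : Algebra σ, V A → ∀ α β γ : Con A,
        Con.inf α β = Con.inf α γ → Con.inf α β = Con.inf α (Con.sup β γ)) := by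
    rintro ⟨n, hn, h⟩ A hA
    obtain ⟨m, rfl⟩ := Nat.exists_eq_add_of_le' hn
    exact neutral_imp_sd m (h A hA)
  exact ⟨⟨h12, fun h => h31 ⟨2, le_rfl, h 2 le_rfl⟩⟩, ⟨fun h => ⟨2, le_rfl, h 2 le_rfl⟩,
    fun h => h12 (h31 h)⟩⟩

end UA
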